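/- For every integer k ≥ 2, cov(𝔐_{k+1}) ≤ cov(𝔐_k); that is, the covering number of the Mycielski ideal on (k+1)^ω is at most the covering number of the Mycielski ideal on k^ω. -/

import Mathlib

/-!
A surjection `φ : m → k` pulls a set `A ∈ 𝔐ₖ` back to `{f | φ ∘ f ∈ A} ∈ 𝔐ₘ`: if `φ ∘ h : X → k` is
not the restriction of a member of `A`, then `h : X → m` is not the restriction of a member of the
preimage. Preimages of a cover form a cover of at most the same cardinality. Since the infimum
of the empty set of cardinals is `0`, one also needs `𝔐ₖ` to cover `k^ω`; for `k ≥ 2` its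
singletons do.
-/

open Cardinal

/-- The set of restrictions to `X` of members of `A`. -/
def restrictSet {k : ℕ} (A : Set (ℕ → Fin k)) (X : Set ℕ) : Set (↥X → Fin k) :=
  {g | ∃ f ∈ A, ∀ x : X, f ↑x = g x}

/-- The Mycielski ideal `𝔐ₖ`: all `A ⊆ k^ω` such that for every infinite `X ⊆ ω`
the set of restrictions of members of `A` to `X` is not all of `X → k`. -/
def Mycielski (k : ℕ) : Set (Set (ℕ → Fin k)) :=
  {A | ∀ X : Set ℕ, X.Infinite → restrictSet A X ≠ Set.univ}

/-- The covering number of a family `I` of subsets of `α`: the least cardinality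
of a subfamily of `I` whose union is all of `α`. -/
noncomputable def covNum {α : Type} (I : Set (Set α)) : Cardinal :=
  sInf {c : Cardinal | ∃ S : Set (Set α), S ⊆ I ∧ ⋃₀ S = Set.univ ∧ #S = c}

section CoveringNumber

variable {α β : Type} {I : Set (Set α)} {J : Set (Set β)}

theorem covNum_le_mk {S : Set (Set α)} (hS : S ⊆ I) (hcov : ⋃₀ S = Set.univ) :
    covNum I ≤ #S :=
  csInf_le' ⟨S, hS, hcov, rfl⟩

theorem exists_cover_mk_eq_covNum (hI : ⋃₀ I = Set.univ) :
    ∃ S ⊆ I, ⋃₀ S = Set.univ ∧ #S = covNum I :=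
  csInf_mem (s := {c | ∃ S ⊆ I, ⋃₀ S = Set.univ ∧ #S = c}) ⟨#I, I, subset_rfl, hI, rfl⟩

theorem covNum_le_covNum_of_preimage_mem (hI : ⋃₀ I = Set.univ) (F : β → α)
    (hF : ∀ A ∈ I, F ⁻¹' A ∈ J) : covNum J ≤ covNum I := by
  obtain ⟨S, hSI, hcov, hcard⟩ := exists_cover_mk_eq_covNum hI
  have hpullback_subset : (F ⁻¹' ·) '' S ⊆ J :=
    Set.image_subset_iff.2 fun A hA => hF A (hSI hA)
  have hpullback_cover : ⋃₀ ((F ⁻¹' ·) '' S) = Set.univ := by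
    rw [Set.sUnion_image, ← Set.preimage_sUnion, hcov, Set.preimage_univ]
  calc
    covNum J ≤ #((F ⁻¹' ·) '' S) := covNum_le_mk hpullback_subset hpullback_cover
    _ ≤ #S := mk_image_le
    _ = covNum I := hcard

end CoveringNumber

section Mycielski

variable {k m : ℕ}

theorem mem_Mycielski_iff {A : Set (ℕ → Fin k)} :
    A ∈ Mycielski k ↔ ∀ X : Set ℕ, X.Infinite → ∃ g : X → Fin k, g ∉ restrictSet A X :=
  forall₂_congr fun _ _ => Set.ne_univ_iff_exists_notMem _

theorem singleton_mem_Mycielski (hk : 2 ≤ k) (f : ℕ → Fin k) : {f} ∈ Mycielski k := by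
  have : Nontrivial (Fin k) := Fin.nontrivial_iff_two_le.2 hk
  refine mem_Mycielski_iff.2 fun X hX => ?_
  obtain ⟨n, hn⟩ := hX.nonempty
  obtain ⟨c, hc⟩ := exists_ne (f n)
  refine ⟨fun _ => c, ?_⟩
  rintro ⟨_, rfl, hfc⟩
  exact hc (hfc ⟨n, hn⟩).symm

theorem sUnion_Mycielski (hk : 2 ≤ k) : ⋃₀ Mycielski k = Set.univ :=
  Set.eq_univ_of_forall fun f => ⟨{f}, singleton_mem_Mycielski hk f, rfl⟩

theorem preimage_comp_mem_Mycielski {φ : Fin m → Fin k} (hφ : Function.Surjective φ)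
    {A : Set (ℕ → Fin k)} (hA : A ∈ Mycielski k) : (φ ∘ ·) ⁻¹' A ∈ Mycielski m := by
  refine mem_Mycielski_iff.2 fun X hX => ?_
  obtain ⟨g, hg⟩ := mem_Mycielski_iff.1 hA X hX
  obtain ⟨h, rfl⟩ := hφ.comp_left g
  refine ⟨h, ?_⟩
  rintro ⟨f, hfA, hfh⟩
  exact hg ⟨φ ∘ f, hfA, fun x => congrArg φ (hfh x)⟩

theorem covNum_Mycielski_succ_le_general (hk : 2 ≤ k) (hkm : k ≤ m) :
    covNum (Mycielski m) ≤ covNum (Mycielski k) := by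
  have : NeZero k := ⟨by omega⟩
  obtain ⟨φ, hφ⟩ : ∃ φ : Fin m → Fin k, Function.Surjective φ :=
    ⟨_, Function.invFun_surjective (Fin.castLE_injective hkm)⟩
  exact covNum_le_covNum_of_preimage_mem (sUnion_Mycielski hk) (φ ∘ ·)
    fun _ hA => preimage_comp_mem_Mycielski hφ hA

end Mycielski

/-- For every integer `k ≥ 2`, `cov(𝔐_{k+1}) ≤ cov(𝔐_k)`. -/
theorem covNum_Mycielski_succ_le (k : ℕ) (hk : 2 ≤ k) :
    covNum (Mycielski (k + 1)) ≤ covNum (Mycielski k) :=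
  covNum_Mycielski_succ_le_general hk k.le_succ
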